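/- arXiv:2108.06101 — 7 statements merged into one kernel-verified Lean document; each statement's English description precedes it below -/
import Mathlib

section
/- Fix T > 0, a positive integer n, Δt = T/n, t_j = j·Δt, real values u₀,…,u_n, and let L1 be the piecewise linear interpolant of these values. Let 0 < α < 1 and 2 ≤ k ≤ n. Then Σ_{l=1}^{k−1} ((u_l − u_{l−1})/Δt) · ∫_{t_{l−1}}^{t_l} (t_k − τ)^{−α} dτ = u_{k−1}·Δt^{−α} − u₀·t_k^{−α} − α·∫_0^{t_{k−1}} L1(τ)·(t_k − τ)^{−1−α} dτ. -/
/-!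
On each cell `[t_{l-1}, t_l]` with `l < k` the kernel `(t_k - τ)^(-α)` is smooth, with derivative
`α (t_k - τ)^(-1-α)`, so ordinary integration by parts against the affine interpolant applies
(`affine_cell_by_parts`). Since `L1` takes the values `u_{l-1}` and `u_l` at the ends of the cell,
the boundary terms telescope over `l`, and the cell integrals add up to the integral over
`[0, t_{k-1}]`.
-/

theorem continuousOn_kernel {a b c : ℝ} (hab : a ≤ b) (hbc : b < c) (s : ℝ) :
    ContinuousOn (fun τ : ℝ => (c - τ) ^ s) (Set.uIcc a b) := by
  rw [Set.uIcc_of_le hab]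
  refine ContinuousOn.rpow_const (by fun_prop) fun τ hτ => Or.inl ?_
  have := hτ.2
  linarith

/-- Integration by parts on one cell `[a, b]` lying strictly to the left of the singularity `c`,
for the affine function with values `x` at `a` and `y` at `b`. -/
theorem affine_cell_by_parts {a b c : ℝ} (hab : a < b) (hbc : b < c) (x y α : ℝ) :
    (y - x) / (b - a) * ∫ τ in a..b, (c - τ) ^ (-α)
      = y * (c - b) ^ (-α) - x * (c - a) ^ (-α)
        - α * ∫ τ in a..b, ((b - τ) * x + (τ - a) * y) / (b - a) * (c - τ) ^ (-1 - α) := by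
  have hd : b - a ≠ 0 := by linarith
  have hp : ∀ τ ∈ Set.uIcc a b,
      HasDerivAt (fun τ => ((b - τ) * x + (τ - a) * y) / (b - a)) ((y - x) / (b - a)) τ := by
    intro τ _
    have h := ((((hasDerivAt_id' τ).const_sub b).mul_const x).add
      (((hasDerivAt_id' τ).sub_const a).mul_const y)).div_const (b - a)
    refine h.congr_deriv ?_
    ring
  have hg : ∀ τ ∈ Set.uIcc a b,
      HasDerivAt (fun τ => (c - τ) ^ (-α)) (α * (c - τ) ^ (-1 - α)) τ := by
    intro τ hτ
    rw [Set.uIcc_of_le hab.le] at hτ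
    have hne : c - τ ≠ 0 := by
      have := hτ.2
      linarith
    have h := ((hasDerivAt_id' τ).const_sub c).rpow_const (p := -α) (Or.inl hne)
    refine h.congr_deriv ?_
    rw [show -1 - α = -α - 1 by ring]
    simp
  have key := intervalIntegral.integral_mul_deriv_eq_deriv_mul hp hg
    intervalIntegrable_const
    ((continuousOn_kernel hab.le hbc (-1 - α)).const_smul α).intervalIntegrable
  rw [intervalIntegral.integral_const_mul] at key
  have hswap : (∫ τ in a..b, ((b - τ) * x + (τ - a) * y) / (b - a) * (α * (c - τ) ^ (-1 - α)))
      = α * ∫ τ in a..b, ((b - τ) * x + (τ - a) * y) / (b - a) * (c - τ) ^ (-1 - α) := by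
    rw [← intervalIntegral.integral_const_mul]
    congr 1
    funext τ
    ring
  have hb : ((b - b) * x + (b - a) * y) / (b - a) = y := by
    field_simp
    ring
  have ha : ((b - a) * x + (a - a) * y) / (b - a) = x := by
    field_simp
    ring
  rw [hswap, hb, ha] at key
  linarith

/-- Integration by parts for the history part of the L1 formula: with `Δt = T/n`,
`t_j = jΔt`, `L1` the piecewise linear interpolant of values `u₀,…,u_n`, `0 < α < 1`
and `2 ≤ k ≤ n`,
`∑_{l=1}^{k-1} ((u_l - u_{l-1})/Δt) ∫_{t_{l-1}}^{t_l} (t_k - τ)^{-α} dτ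
  = u_{k-1} Δt^{-α} - u₀ t_k^{-α} - α ∫_0^{t_{k-1}} L1(τ) (t_k - τ)^{-1-α} dτ`. -/
theorem l1_history_integration_by_parts
    (T : ℝ) (hT : 0 < T) (n : ℕ) (hn : 0 < n)
    (Δt : ℝ) (hΔt : Δt = T / n)
    (t : ℕ → ℝ) (ht : ∀ j, t j = (j : ℝ) * Δt)
    (u : ℕ → ℝ)
    (L1 : ℝ → ℝ)
    (hL1 : ∀ l, 1 ≤ l → l ≤ n → ∀ τ ∈ Set.Icc (t (l - 1)) (t l),
      L1 τ = ((t l - τ) * u (l - 1) + (τ - t (l - 1)) * u l) / Δt)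
    (α : ℝ) (hα0 : 0 < α) (hα1 : α < 1)
    (k : ℕ) (hk : 2 ≤ k) (hkn : k ≤ n) :
    ∑ l ∈ Finset.Icc 1 (k - 1),
        ((u l - u (l - 1)) / Δt) * ∫ τ in (t (l - 1))..(t l), (t k - τ) ^ (-α)
      = u (k - 1) * Δt ^ (-α) - u 0 * (t k) ^ (-α)
        - α * ∫ τ in (0 : ℝ)..(t (k - 1)), L1 τ * (t k - τ) ^ (-1 - α) := by
  have hn' : (0 : ℝ) < n := by exact_mod_cast hn
  have hd : 0 < Δt := by
    rw [hΔt]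
    positivity
  obtain ⟨m, rfl⟩ : ∃ m, k = m + 1 := ⟨k - 1, by omega⟩
  simp only [Nat.add_sub_cancel]
  have hstep : ∀ j, t (j + 1) - t j = Δt := by
    intro j
    rw [ht, ht]
    push_cast
    ring
  have hlt : ∀ j, j < m → t (j + 1) < t (m + 1) := by
    intro j hj
    rw [ht, ht]
    have : ((j + 1 : ℕ) : ℝ) < ((m + 1 : ℕ) : ℝ) := by exact_mod_cast Nat.succ_lt_succ hj
    exact mul_lt_mul_of_pos_right this hd
  have hle : ∀ j, t j < t (j + 1) := fun j => by linarith [hstep j]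
  have hL : ∀ j, j < m → Set.EqOn
      (fun τ => ((t (j + 1) - τ) * u j + (τ - t j) * u (j + 1)) / (t (j + 1) - t j)
        * (t (m + 1) - τ) ^ (-1 - α))
      (fun τ => L1 τ * (t (m + 1) - τ) ^ (-1 - α)) (Set.uIcc (t j) (t (j + 1))) := by
    intro j hj τ hτ
    rw [Set.uIcc_of_le (hle j).le] at hτ
    have h := hL1 (j + 1) (by omega) (by omega) τ hτ
    simp only [Nat.add_sub_cancel] at h
    simp only [h, hstep]
  have hint : ∀ j < m, IntervalIntegrable (fun τ => L1 τ * (t (m + 1) - τ) ^ (-1 - α))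
      MeasureTheory.volume (t j) (t (j + 1)) := by
    intro j hj
    refine ContinuousOn.intervalIntegrable (ContinuousOn.congr ?_ (hL j hj).symm)
    exact ContinuousOn.mul (by fun_prop) (continuousOn_kernel (hle j).le (hlt j hj) _)
  have hsum := intervalIntegral.sum_integral_adjacent_intervals hint
  have h0 : t 0 = 0 := by simp [ht]
  have hcell : ∀ j ∈ Finset.range m,
      (u (j + 1) - u j) / Δt * ∫ τ in (t j)..(t (j + 1)), (t (m + 1) - τ) ^ (-α)
        = (u (j + 1) * (t (m + 1) - t (j + 1)) ^ (-α) - u j * (t (m + 1) - t j) ^ (-α))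
          - α * ∫ τ in (t j)..(t (j + 1)), L1 τ * (t (m + 1) - τ) ^ (-1 - α) := by
    intro j hj
    have hj' := Finset.mem_range.mp hj
    have h := affine_cell_by_parts (hle j) (hlt j hj') (u j) (u (j + 1)) α
    rwa [intervalIntegral.integral_congr (hL j hj'), hstep j] at h
  have hreindex : ∀ f : ℕ → ℝ, ∑ l ∈ Finset.Icc 1 m, f l = ∑ j ∈ Finset.range m, f (j + 1) := by
    intro f
    rw [Finset.range_eq_Ico, Finset.sum_Ico_add' f 0 m 1]
    rfl
  rw [hreindex]
  simp only [Nat.add_sub_cancel]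
  rw [Finset.sum_congr rfl hcell, Finset.sum_sub_distrib,
    Finset.sum_range_sub (fun j => u j * (t (m + 1) - t j) ^ (-α)), ← Finset.mul_sum, hsum,
    hstep, h0, sub_zero]
end

section
/- Fix T > 0, a positive integer n ≥ 2, Δt = T/n, t_j = j·Δt, real values u₀,…,u_n, let L1 be the piecewise linear interpolant of these values, and let λ > 0. Define F_k = ∫_0^{t_{k−1}} L1(τ)·e^{−λ(t_k−τ)/T} dτ for 1 ≤ k ≤ n. Then F₁ = 0, and for 2 ≤ k ≤ n: F_k = e^{−Δt·λ/T}·F_{k−1} + T·(e^{−Δt·λ/T}/(Δt·λ²))·(−Δt·λ·e^{−Δt·λ/T} + T − T·e^{−Δt·λ/T})·u_{k−2} + T·(e^{−Δt·λ/T}/(Δt·λ²))·(Δt·λ − T + T·e^{−Δt·λ/T})·u_{k−1}. -/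
/-!
Split `∫_0^{t_{k-1}}` at `t_{k-2}`. On `[0, t_{k-2}]` the kernel factors as
`e^{-λ(t_k-τ)/T} = e^{-λΔt/T} e^{-λ(t_{k-1}-τ)/T}`, which gives `e^{-λΔt/T} F_{k-1}`. On
`[t_{k-2}, t_{k-1}]` the interpolant is affine, and the integral of an affine function against
an exponential is explicit (`integral_affine_mul_exp`). The splitting requires integrability of
`L1` times the kernel, which holds because it agrees with a continuous function on each cell.
-/

/-- Integral over a cell `[a, a + h]` of the affine function with end values `p`, `q`, against
the exponential kernel based one step beyond the cell, at `a + 2h`. -/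
lemma integral_affine_mul_exp (a h T lam p q : ℝ) (hh : h ≠ 0) (hT : T ≠ 0) (hlam : lam ≠ 0) :
    ∫ τ in a..(a + h), ((a + h - τ) * p + (τ - a) * q) / h *
        Real.exp (-lam * (a + 2 * h - τ) / T)
      = T * (Real.exp (-h * lam / T) / (h * lam ^ 2)) *
            (-h * lam * Real.exp (-h * lam / T) + T - T * Real.exp (-h * lam / T)) * p
        + T * (Real.exp (-h * lam / T) / (h * lam ^ 2)) *
            (h * lam - T + T * Real.exp (-h * lam / T)) * q := by
  -- The antiderivative comes from one integration by parts.
  have hd : ∀ τ : ℝ, HasDerivAt (fun τ : ℝ =>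
      (((a + h - τ) * p + (τ - a) * q) / h * (T / lam) - (q - p) / h * (T / lam) ^ 2) *
        Real.exp (-lam * (a + 2 * h - τ) / T))
      (((a + h - τ) * p + (τ - a) * q) / h * Real.exp (-lam * (a + 2 * h - τ) / T)) τ := by
    intro τ
    have h1 : HasDerivAt (fun τ : ℝ => -lam * (a + 2 * h - τ) / T) (-lam * (-1) / T) τ :=
      (((hasDerivAt_id τ).const_sub (a + 2 * h)).const_mul (-lam)).div_const T
    have h2 : HasDerivAt (fun τ : ℝ => ((a + h - τ) * p + (τ - a) * q) / h * (T / lam)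
        - (q - p) / h * (T / lam) ^ 2) (((-1) * p + 1 * q) / h * (T / lam)) τ :=
      ((((((hasDerivAt_id τ).const_sub (a + h)).mul_const p).add
        (((hasDerivAt_id τ).sub_const a).mul_const q)).div_const h).mul_const
          (T / lam)).sub_const _
    refine (h2.mul h1.exp).congr_deriv ?_
    field_simp
    ring
  rw [intervalIntegral.integral_eq_sub_of_hasDerivAt (fun τ _ => hd τ)
    (Continuous.intervalIntegrable (by fun_prop) _ _)]
  have e1 : -lam * (a + 2 * h - (a + h)) / T = -h * lam / T := by ring
  have e2 : -lam * (a + 2 * h - a) / T = -h * lam / T + -h * lam / T := by ring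
  rw [e1, e2, Real.exp_add]
  generalize Real.exp (-h * lam / T) = E
  field_simp
  ring

/-- Recursion for the history integrals: with `Δt = T/n`, `t_j = jΔt`, `L1` the
piecewise linear interpolant of `u₀,…,u_n`, `λ > 0`, and
`F_k = ∫_0^{t_{k-1}} L1(τ) e^{-λ(t_k-τ)/T} dτ` for `1 ≤ k ≤ n`, one has `F₁ = 0` and,
for `2 ≤ k ≤ n`,
`F_k = e^{-Δtλ/T} F_{k-1}
  + T (e^{-Δtλ/T}/(Δtλ²)) (-Δtλ e^{-Δtλ/T} + T - T e^{-Δtλ/T}) u_{k-2}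
  + T (e^{-Δtλ/T}/(Δtλ²)) (Δtλ - T + T e^{-Δtλ/T}) u_{k-1}`. -/
theorem history_integral_recursion
    (T : ℝ) (hT : 0 < T) (n : ℕ) (hn : 2 ≤ n)
    (Δt : ℝ) (hΔt : Δt = T / n)
    (t : ℕ → ℝ) (ht : ∀ j, t j = (j : ℝ) * Δt)
    (u : ℕ → ℝ)
    (L1 : ℝ → ℝ)
    (hL1 : ∀ l, 1 ≤ l → l ≤ n → ∀ τ ∈ Set.Icc (t (l - 1)) (t l),
      L1 τ = ((t l - τ) * u (l - 1) + (τ - t (l - 1)) * u l) / Δt)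
    (lam : ℝ) (hlam : 0 < lam)
    (F : ℕ → ℝ)
    (hF : ∀ k, 1 ≤ k → k ≤ n →
      F k = ∫ τ in (0 : ℝ)..(t (k - 1)), L1 τ * Real.exp (-lam * (t k - τ) / T)) :
    F 1 = 0 ∧
    ∀ k, 2 ≤ k → k ≤ n →
      F k = Real.exp (-Δt * lam / T) * F (k - 1)
        + T * (Real.exp (-Δt * lam / T) / (Δt * lam ^ 2)) *
            (-Δt * lam * Real.exp (-Δt * lam / T) + T - T * Real.exp (-Δt * lam / T)) *
            u (k - 2)
        + T * (Real.exp (-Δt * lam / T) / (Δt * lam ^ 2)) *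
            (Δt * lam - T + T * Real.exp (-Δt * lam / T)) * u (k - 1) := by
  have hn0 : (0 : ℝ) < n := by exact_mod_cast (by omega : 0 < n)
  have hpos : 0 < Δt := hΔt ▸ div_pos hT hn0
  have ht0 : t 0 = 0 := by simp [ht]
  have hstep : ∀ j, t (j + 1) = t j + Δt := fun j => by rw [ht, ht]; push_cast; ring
  have hcell : ∀ m, m + 1 ≤ n → ∀ τ ∈ Set.uIcc (t m) (t (m + 1)),
      L1 τ = ((t m + Δt - τ) * u m + (τ - t m) * u (m + 1)) / Δt := by
    intro m hm τ hτ
    rw [Set.uIcc_of_le (by rw [hstep]; linarith)] at hτ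
    have := hL1 (m + 1) (by omega) hm τ (by simpa using hτ)
    simpa [hstep] using this
  have hint : ∀ c : ℝ, ∀ m, m + 1 ≤ n → IntervalIntegrable
      (fun τ => L1 τ * Real.exp (-lam * (c - τ) / T)) MeasureTheory.volume (t m) (t (m + 1)) := by
    intro c m hm
    have hc : IntervalIntegrable (fun τ => ((t m + Δt - τ) * u m + (τ - t m) * u (m + 1)) / Δt *
        Real.exp (-lam * (c - τ) / T)) MeasureTheory.volume (t m) (t (m + 1)) :=
      Continuous.intervalIntegrable (by fun_prop) _ _
    refine hc.congr fun τ hτ => ?_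
    simp only [hcell m hm τ (Set.uIoc_subset_uIcc hτ)]
  refine ⟨?_, fun k hk2 hkn => ?_⟩
  · rw [hF 1 le_rfl (by omega)]
    simp [ht0]
  obtain ⟨m, rfl⟩ : ∃ m, k = m + 2 := ⟨k - 2, by omega⟩
  have hF1 := hF (m + 1) (by omega) (by omega)
  have hF2 := hF (m + 2) (by omega) hkn
  simp only [show m + 2 - 1 = m + 1 by omega, show m + 1 - 1 = m by omega,
    show m + 2 - 2 = m by omega] at hF1 hF2 ⊢
  have hI0 : IntervalIntegrable (fun τ => L1 τ * Real.exp (-lam * (t (m + 2) - τ) / T))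
      MeasureTheory.volume 0 (t m) := by
    have := IntervalIntegrable.trans_iterate (a := t) (n := m)
      fun j hj => hint (t (m + 2)) j (by omega)
    rwa [ht0] at this
  have ht2 : t (m + 2) = t m + 2 * Δt := by rw [hstep (m + 1), hstep m]; ring
  have hhist : ∫ τ in (0 : ℝ)..(t m), L1 τ * Real.exp (-lam * (t (m + 2) - τ) / T)
      = Real.exp (-Δt * lam / T) * F (m + 1) := by
    rw [hF1, ← intervalIntegral.integral_const_mul]
    congr 1
    funext τ
    have : -lam * (t (m + 2) - τ) / T = -Δt * lam / T + -lam * (t (m + 1) - τ) / T := by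
      rw [hstep (m + 1)]; ring
    rw [this, Real.exp_add]
    ring
  have hlast : ∫ τ in (t m)..(t (m + 1)), L1 τ * Real.exp (-lam * (t (m + 2) - τ) / T)
      = ∫ τ in (t m)..(t m + Δt), ((t m + Δt - τ) * u m + (τ - t m) * u (m + 1)) / Δt *
        Real.exp (-lam * (t m + 2 * Δt - τ) / T) := by
    rw [← hstep m, ← ht2]
    refine intervalIntegral.integral_congr fun τ hτ => ?_
    simp only [hcell m (by omega) τ hτ, hstep m]
  rw [hF2, ← intervalIntegral.integral_add_adjacent_intervals hI0 (hint _ m (by omega)),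
    hhist, hlast, integral_affine_mul_exp _ _ _ _ _ _ hpos.ne' hT.ne' hlam.ne']
  ring
end

section
/- Fix T > 0, a positive integer n, Δt = T/n, t_j = j·Δt, real values u₀,…,u_n with piecewise linear interpolant L1, an exponent 0 < α < 1, an integer 2 ≤ k ≤ n, and finitely many positive reals θᵢ, λᵢ indexed by a finite set I. With F_{k,i} = ∫_0^{t_{k−1}} L1(τ)·e^{−λᵢ(t_k−τ)/T} dτ, s = Δt^{−α}/Γ(2−α), and the coefficients d₀,…,d_{k−1} as defined in the context, one has the identity (1/Γ(1−α))·( u_{k−1}·Δt^{−α} − u₀·t_k^{−α} − (α/T^{1+α})·Σ_{i∈I} θᵢ·F_{k,i} ) + (u_k − u_{k−1})/(Δt^{α}·Γ(2−α)) = s·( u_k − Σ_{l=0}^{k−1} d_l·u_l ). -/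
/-!
Splitting `F_{k,i}` over the mesh intervals and inserting the linear interpolant expresses
`Δt · F_{k,i}` through the moments of the two hat-function halves on each interval
(`integral_interpolant`). Regrouping by nodal value `u_l` instead of by interval
(`sum_regroup`) produces exactly the integrals in the kernels `d_l`. What is left is the algebra
of the prefactors: `Γ(2-α) = (1-α) Γ(1-α)`, `t_k^{-α} = k^{-α} Δt^{-α}` and
`Δt^{α-1} = Δt^α / Δt`.
-/

/-- Summation by nodes instead of by intervals: the interior node `l + 1` collects `b l` from
the interval on its left and `a (l + 1)` from the interval on its right. -/
lemma sum_regroup (a b u : ℕ → ℝ) (m : ℕ) :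
    ∑ l ∈ Finset.range (m + 1), (a l * u l + b l * u (l + 1))
      = a 0 * u 0 + ∑ l ∈ Finset.range m, (b l + a (l + 1)) * u (l + 1) + b m * u (m + 1) := by
  induction m with
  | zero => simp
  | succ m ih =>
    rw [Finset.sum_range_succ, ih, Finset.sum_range_succ _ m]
    ring

/-- The weighted integral of a piecewise linear interpolant in terms of the moments of the
weight on each mesh interval. -/
lemma integral_interpolant (t : ℕ → ℝ) (ht : Monotone t) (u : ℕ → ℝ) (L w : ℝ → ℝ)
    (hw : Continuous w) (h : ℝ) (N : ℕ)
    (hL : ∀ l < N, ∀ τ ∈ Set.Icc (t l) (t (l + 1)),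
      L τ = ((t (l + 1) - τ) * u l + (τ - t l) * u (l + 1)) / h) :
    ∫ τ in (t 0)..(t N), L τ * w τ
      = (∑ l ∈ Finset.range N, ((∫ τ in (t l)..(t (l + 1)), (t (l + 1) - τ) * w τ) * u l
          + (∫ τ in (t l)..(t (l + 1)), (τ - t l) * w τ) * u (l + 1))) / h := by
  have key : ∀ l < N, Set.EqOn (fun τ => L τ * w τ)
      (fun τ => (u l / h) * ((t (l + 1) - τ) * w τ) + (u (l + 1) / h) * ((τ - t l) * w τ))
      (Set.uIcc (t l) (t (l + 1))) := by
    intro l hl τ hτ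
    rw [Set.uIcc_of_le (ht l.le_succ)] at hτ
    simp only [hL l hl τ hτ]
    ring
  rw [← intervalIntegral.sum_integral_adjacent_intervals, Finset.sum_div]
  · refine Finset.sum_congr rfl fun l hl => ?_
    rw [intervalIntegral.integral_congr (key l (Finset.mem_range.1 hl)),
      intervalIntegral.integral_add, intervalIntegral.integral_const_mul,
      intervalIntegral.integral_const_mul]
    · ring
    · exact Continuous.intervalIntegrable (by fun_prop) _ _
    · exact Continuous.intervalIntegrable (by fun_prop) _ _
  · intro l hl
    refine IntervalIntegrable.congr (f := fun τ => (u l / h) * ((t (l + 1) - τ) * w τ)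
      + (u (l + 1) / h) * ((τ - t l) * w τ)) ?_ ?_
    · exact fun τ hτ => (key l hl (Set.uIoc_subset_uIcc hτ)).symm
    · exact Continuous.intervalIntegrable (by fun_prop) _ _

/-- The RF-L1 formula rewritten in terms of the discrete kernels `d_l`:
with `Δt = T/n`, `t_j = jΔt`, `L1` the piecewise linear interpolant of `u₀,…,u_n`,
`0 < α < 1`, `2 ≤ k ≤ n`, positive weights/exponents `θᵢ, λᵢ` (`i ∈ I`),
`F_{k,i} = ∫_0^{t_{k-1}} L1(τ) e^{-λᵢ(t_k-τ)/T} dτ`, `s = Δt^{-α}/Γ(2-α)` and the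
kernels `d₀,…,d_{k-1}` of the paper, one has
`(1/Γ(1-α)) (u_{k-1} Δt^{-α} - u₀ t_k^{-α} - (α/T^{1+α}) ∑ᵢ θᵢ F_{k,i})
  + (u_k - u_{k-1})/(Δt^α Γ(2-α)) = s (u_k - ∑_{l=0}^{k-1} d_l u_l)`. -/
theorem rf_l1_discrete_kernel_form {ι : Type*}
    (T : ℝ) (hT : 0 < T) (n : ℕ) (hn : 0 < n)
    (Δt : ℝ) (hΔt : Δt = T / n)
    (t : ℕ → ℝ) (ht : ∀ j, t j = (j : ℝ) * Δt)
    (u : ℕ → ℝ)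
    (L1 : ℝ → ℝ)
    (hL1 : ∀ l, 1 ≤ l → l ≤ n → ∀ τ ∈ Set.Icc (t (l - 1)) (t l),
      L1 τ = ((t l - τ) * u (l - 1) + (τ - t (l - 1)) * u l) / Δt)
    (α : ℝ) (hα0 : 0 < α) (hα1 : α < 1)
    (k : ℕ) (hk : 2 ≤ k) (hkn : k ≤ n)
    (I : Finset ι) (θ lam : ι → ℝ)
    (hθ : ∀ i ∈ I, 0 < θ i) (hlam : ∀ i ∈ I, 0 < lam i)
    (F : ι → ℝ)
    (hF : ∀ i ∈ I,
      F i = ∫ τ in (0 : ℝ)..(t (k - 1)), L1 τ * Real.exp (-(lam i) * (t k - τ) / T))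
    (s : ℝ) (hs : s = Δt ^ (-α) / Real.Gamma (2 - α))
    (d : ℕ → ℝ)
    (hd0 : d 0 = (1 - α) * ((k : ℝ) ^ (-α) + (α / T ^ (1 + α)) * Δt ^ (α - 1) *
      ∑ i ∈ I, θ i * ∫ τ in (t 0)..(t 1), (t 1 - τ) * Real.exp (-(lam i) * (t k - τ) / T)))
    (hdl : ∀ l, 1 ≤ l → l ≤ k - 2 →
      d l = (α * (1 - α) / T ^ (1 + α)) * Δt ^ (α - 1) *
        ∑ i ∈ I, θ i *
          ((∫ τ in (t (l - 1))..(t l), (τ - t (l - 1)) * Real.exp (-(lam i) * (t k - τ) / T))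
          + ∫ τ in (t l)..(t (l + 1)), (t (l + 1) - τ) * Real.exp (-(lam i) * (t k - τ) / T)))
    (hdk : d (k - 1) = α + (α * (1 - α) / T ^ (1 + α)) * Δt ^ (α - 1) *
      ∑ i ∈ I, θ i *
        ∫ τ in (t (k - 2))..(t (k - 1)), (τ - t (k - 2)) * Real.exp (-(lam i) * (t k - τ) / T)) :
    (1 / Real.Gamma (1 - α)) *
        (u (k - 1) * Δt ^ (-α) - u 0 * (t k) ^ (-α)
          - (α / T ^ (1 + α)) * ∑ i ∈ I, θ i * F i)
      + (u k - u (k - 1)) / (Δt ^ α * Real.Gamma (2 - α))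
      = s * (u k - ∑ l ∈ Finset.range k, d l * u l) := by
  obtain ⟨m, rfl⟩ : ∃ m, k = m + 2 := ⟨k - 2, by omega⟩
  have hm1 : m + 2 - 1 = m + 1 := by omega
  have hm2 : m + 2 - 2 = m := by omega
  rw [hm1, hm2] at hdk
  rw [hm2] at hdl
  simp only [hm1] at hF ⊢
  have hn' : (0 : ℝ) < n := by exact_mod_cast hn
  have hΔ : 0 < Δt := by rw [hΔt]; positivity
  have hmono : Monotone t := by
    intro a b hab
    rw [ht, ht]
    have : (a : ℝ) ≤ b := by exact_mod_cast hab
    gcongr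
  have ht0 : t 0 = 0 := by simp [ht]
  set w : ι → ℝ → ℝ := fun i τ => Real.exp (-(lam i) * (t (m + 2) - τ) / T) with hw
  set A : ℕ → ι → ℝ := fun l i => ∫ τ in (t l)..(t (l + 1)), (t (l + 1) - τ) * w i τ with hA
  set B : ℕ → ι → ℝ := fun l i => ∫ τ in (t l)..(t (l + 1)), (τ - t l) * w i τ with hB
  have hF' : ∀ i ∈ I, F i
      = (∑ l ∈ Finset.range (m + 1), (A l i * u l + B l i * u (l + 1))) / Δt := by
    intro i hi
    rw [hF i hi, ← ht0]
    refine integral_interpolant t hmono u L1 (w i) (by simp only [hw]; fun_prop) Δt (m + 1) ?_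
    intro l hl τ hτ
    exact hL1 (l + 1) (by omega) (by omega) τ hτ
  set a : ℕ → ℝ := fun l => ∑ i ∈ I, θ i * A l i with ha
  set b : ℕ → ℝ := fun l => ∑ i ∈ I, θ i * B l i with hb
  have hθF : ∑ i ∈ I, θ i * F i
      = (∑ l ∈ Finset.range (m + 1), (a l * u l + b l * u (l + 1))) / Δt := by
    simp only [ha, hb, Finset.sum_mul, ← Finset.sum_add_distrib]
    rw [Finset.sum_comm, Finset.sum_div]
    refine Finset.sum_congr rfl fun i hi => ?_
    rw [hF' i hi, mul_div_assoc', Finset.mul_sum]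
    congr 1
    exact Finset.sum_congr rfl fun l _ => by ring
  set c : ℝ := α * (1 - α) / T ^ (1 + α) * Δt ^ (α - 1) with hc
  have hd0' : d 0 = (1 - α) * ((m + 2 : ℕ) : ℝ) ^ (-α) + c * a 0 := by
    have : d 0 = (1 - α) * (((m + 2 : ℕ) : ℝ) ^ (-α)
      + (α / T ^ (1 + α)) * Δt ^ (α - 1) * a 0) := hd0
    rw [this, hc]
    ring
  have hdl' : ∀ l < m, d (l + 1) = c * (b l + a (l + 1)) := by
    intro l hl
    have : d (l + 1) = c * ∑ i ∈ I, θ i * (B l i + A (l + 1) i) :=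
      hdl (l + 1) (by omega) (by omega)
    rw [this]
    simp only [ha, hb, mul_add, Finset.sum_add_distrib]
  have hdk' : d (m + 1) = α + c * b m := hdk
  have hsum : ∑ l ∈ Finset.range (m + 2), d l * u l
      = (1 - α) * ((m + 2 : ℕ) : ℝ) ^ (-α) * u 0 + α * u (m + 1)
        + c * ∑ l ∈ Finset.range (m + 1), (a l * u l + b l * u (l + 1)) := by
    rw [sum_regroup, Finset.sum_range_succ, Finset.sum_range_succ', hd0', hdk',
      Finset.sum_congr rfl fun l hl => by rw [hdl' l (Finset.mem_range.1 hl), mul_assoc],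
      ← Finset.mul_sum]
    ring
  rw [hsum, hθF, hs, hc]
  generalize ∑ l ∈ Finset.range (m + 1), (a l * u l + b l * u (l + 1)) = S
  have hG : Real.Gamma (2 - α) = (1 - α) * Real.Gamma (1 - α) := by
    rw [← Real.Gamma_add_one (by linarith : (1 - α) ≠ 0)]
    congr 1
    ring
  have hGpos : 0 < Real.Gamma (1 - α) := Real.Gamma_pos_of_pos (by linarith)
  have hα' : (1 - α) ≠ 0 := by linarith
  have htk : t (m + 2) ^ (-α) = ((m + 2 : ℕ) : ℝ) ^ (-α) * Δt ^ (-α) := by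
    rw [ht, Real.mul_rpow (by positivity) hΔ.le]
  have hTp : 0 < T ^ (1 + α) := Real.rpow_pos_of_pos hT _
  have hΔp : 0 < Δt ^ α := Real.rpow_pos_of_pos hΔ _
  rw [htk, hG, Real.rpow_sub_one hΔ.ne', Real.rpow_neg hΔ.le]
  generalize ((m + 2 : ℕ) : ℝ) ^ (-α) = K
  field_simp
  ring
end

section
/- Fix T > 0, a positive integer n, Δt = T/n, t_j = j·Δt, an exponent 0 < α < 1, an integer 2 ≤ k ≤ n, a tolerance ε ≥ 0, and finitely many positive reals θᵢ, λᵢ indexed by a finite set I. Assume the exponential-sum upper bound Σ_{i∈I} θᵢ·e^{−λᵢ s/T} ≤ (1+ε)·(s/T)^{−1−α} holds for all s ∈ [Δt, t_k]. Then, with the discrete kernels d_l as defined in the context, Σ_{l=0}^{k−1} d_l ≤ 1 + ε. -/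
/-!
On each cell `[t_j, t_{j+1}]` the two hat weights `t_{j+1} - τ` and `τ - t_j` add up to `Δt`. Writing
`C = α(1-α) T^{-1-α} Δt^{α-1}` and `G s = ∑ᵢ θᵢ e^{-λᵢ s/T}`, the kernels therefore telescope to
`∑ d_l = α + (1-α) k^{-α} + C Δt ∫_{Δt}^{t_k} G s ds`. The bound on `G` and
`∫_{Δt}^{t_k} s^{-1-α} ds = Δt^{-α} (1 - k^{-α}) / α` give
`∑ d_l ≤ α + (1-α) k^{-α} + (1-α)(1+ε)(1 - k^{-α})`, which is at most `1 + ε` since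
`0 ≤ k^{-α}`. The two halves are `hat_cell_sum` (summing the hat weights on a cell) and
`expSum_integral_le` (integrating the bound).
-/

open intervalIntegral in
/-- The two hat weights on the cell `[a, b]` add up to the constant `b - a`. -/
lemma hat_cell_sum {ι : Type*} (I : Finset ι) (θ lam : ι → ℝ) (T c a b : ℝ) :
    ∑ i ∈ I, θ i * (∫ τ in a..b, (b - τ) * Real.exp (-(lam i) * (c - τ) / T))
      + ∑ i ∈ I, θ i * (∫ τ in a..b, (τ - a) * Real.exp (-(lam i) * (c - τ) / T))
    = (b - a) * ∫ τ in a..b, ∑ i ∈ I, θ i * Real.exp (-(lam i) * (c - τ) / T) := by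
  rw [integral_finsetSum (fun i _ => Continuous.intervalIntegrable (by fun_prop) _ _),
    ← Finset.sum_add_distrib, Finset.mul_sum]
  refine Finset.sum_congr rfl fun i _ => ?_
  rw [← mul_add, ← integral_add (Continuous.intervalIntegrable (by fun_prop) _ _)
    (Continuous.intervalIntegrable (by fun_prop) _ _), integral_const_mul, mul_left_comm,
    ← integral_const_mul (b - a)]
  congr 2
  ext τ
  ring

open intervalIntegral in
/-- Integrating the exponential-sum bound over `[a, b]`, with `a > 0`. -/
lemma expSum_integral_le {G : ℝ → ℝ} (hG : Continuous G) {T α M a b : ℝ} (hT : 0 < T)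
    (hα : 0 < α) (ha : 0 < a) (hab : a ≤ b)
    (h : ∀ s ∈ Set.Icc a b, G s ≤ M * (s / T) ^ (-1 - α)) :
    ∫ s in a..b, G s ≤ M * T ^ (1 + α) * ((a ^ (-α) - b ^ (-α)) / α) := by
  have h0 : (0 : ℝ) ∉ Set.uIcc a b := by
    rw [Set.uIcc_of_le hab]
    exact fun hx => absurd hx.1 (not_le.2 ha)
  calc ∫ s in a..b, G s ≤ ∫ s in a..b, M * T ^ (1 + α) * s ^ (-1 - α) := by
        refine integral_mono_on hab (hG.intervalIntegrable _ _)
          ((intervalIntegrable_rpow (Or.inr h0)).const_mul _) fun s hs => ?_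
        refine (h s hs).trans_eq ?_
        have hs0 : 0 < s := ha.trans_le hs.1
        rw [Real.div_rpow hs0.le hT.le, show (-1 - α) = -(1 + α) by ring,
          Real.rpow_neg hT.le, div_inv_eq_mul]
        ring
    _ = _ := by
        rw [integral_const_mul, integral_rpow (Or.inr ⟨by linarith, h0⟩),
          show -1 - α + 1 = -α by ring]
        congr 1
        field_simp
        ring

/-- Bound on the sum of the discrete kernels (Lemma 7(2)): with `Δt = T/n`, `t_j = jΔt`,
`0 < α < 1`, `2 ≤ k ≤ n`, `ε ≥ 0`, positive weights/exponents `θᵢ, λᵢ` (`i ∈ I`) whose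
exponential sum satisfies `∑ᵢ θᵢ e^{-λᵢ s/T} ≤ (1+ε)(s/T)^{-1-α}` for all `s ∈ [Δt, t_k]`,
one has `∑_{l=0}^{k-1} d_l ≤ 1 + ε`. -/
theorem discrete_kernels_sum_le {ι : Type*}
    (T : ℝ) (hT : 0 < T) (n : ℕ) (hn : 0 < n)
    (Δt : ℝ) (hΔt : Δt = T / n)
    (t : ℕ → ℝ) (ht : ∀ j, t j = (j : ℝ) * Δt)
    (α : ℝ) (hα0 : 0 < α) (hα1 : α < 1)
    (k : ℕ) (hk : 2 ≤ k) (hkn : k ≤ n)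
    (ε : ℝ) (hε : 0 ≤ ε)
    (I : Finset ι) (θ lam : ι → ℝ)
    (hθ : ∀ i ∈ I, 0 < θ i) (hlam : ∀ i ∈ I, 0 < lam i)
    (hbound : ∀ s ∈ Set.Icc Δt (t k),
      ∑ i ∈ I, θ i * Real.exp (-(lam i) * s / T) ≤ (1 + ε) * (s / T) ^ (-1 - α))
    (d : ℕ → ℝ)
    (hd0 : d 0 = (1 - α) * ((k : ℝ) ^ (-α) + (α / T ^ (1 + α)) * Δt ^ (α - 1) *
      ∑ i ∈ I, θ i * ∫ τ in (t 0)..(t 1), (t 1 - τ) * Real.exp (-(lam i) * (t k - τ) / T)))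
    (hdl : ∀ l, 1 ≤ l → l ≤ k - 2 →
      d l = (α * (1 - α) / T ^ (1 + α)) * Δt ^ (α - 1) *
        ∑ i ∈ I, θ i *
          ((∫ τ in (t (l - 1))..(t l), (τ - t (l - 1)) * Real.exp (-(lam i) * (t k - τ) / T))
          + ∫ τ in (t l)..(t (l + 1)), (t (l + 1) - τ) * Real.exp (-(lam i) * (t k - τ) / T)))
    (hdk : d (k - 1) = α + (α * (1 - α) / T ^ (1 + α)) * Δt ^ (α - 1) *
      ∑ i ∈ I, θ i *
        ∫ τ in (t (k - 2))..(t (k - 1)), (τ - t (k - 2)) * Real.exp (-(lam i) * (t k - τ) / T)) :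
    ∑ l ∈ Finset.range k, d l ≤ 1 + ε := by
  obtain ⟨m, rfl⟩ : ∃ m, k = m + 2 := ⟨k - 2, by omega⟩
  have hn' : (0 : ℝ) < n := by exact_mod_cast hn
  have hΔ : 0 < Δt := by rw [hΔt]; positivity
  have hstep : ∀ j, t (j + 1) - t j = Δt := fun j => by rw [ht, ht]; push_cast; ring
  set C := (α * (1 - α) / T ^ (1 + α)) * Δt ^ (α - 1) with hC
  have hC0 : 0 ≤ C := by
    have : 0 < 1 - α := by linarith
    positivity
  set G : ℝ → ℝ := fun s => ∑ i ∈ I, θ i * Real.exp (-(lam i) * s / T) with hGdef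
  have hG : Continuous G := by fun_prop
  set L : ℕ → ℝ := fun j => ∑ i ∈ I, θ i *
    ∫ τ in (t j)..(t (j + 1)), (t (j + 1) - τ) * Real.exp (-(lam i) * (t (m + 2) - τ) / T) with hL
  set R : ℕ → ℝ := fun j => ∑ i ∈ I, θ i *
    ∫ τ in (t j)..(t (j + 1)), (τ - t j) * Real.exp (-(lam i) * (t (m + 2) - τ) / T) with hR
  have e0 : d 0 = (1 - α) * ((m + 2 : ℕ) : ℝ) ^ (-α) + C * L 0 := by
    rw [hd0, hC, hL]; simp only [zero_add]; ring
  have el : ∀ l ∈ Finset.range m, d (l + 1) = C * (R l + L (l + 1)) := fun l hl => by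
    rw [hdl (l + 1) (by omega) (by have := Finset.mem_range.1 hl; omega)]
    simp only [hR, hL, Nat.add_sub_cancel, mul_add, Finset.sum_add_distrib]
  have ek : d (m + 1) = α + C * R m := hdk
  have hLR : ∀ j, L j + R j = Δt * ∫ τ in (t j)..(t (j + 1)), G (t (m + 2) - τ) := fun j => by
    rw [← hstep j]
    exact hat_cell_sum I θ lam T (t (m + 2)) (t j) (t (j + 1))
  have hsumLR : ∑ j ∈ Finset.range (m + 1), (L j + R j) = Δt * ∫ s in Δt..(t (m + 2)), G s := by
    simp only [hLR]
    rw [← Finset.mul_sum, intervalIntegral.sum_integral_adjacent_intervals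
      (fun j _ => Continuous.intervalIntegrable (by fun_prop) _ _),
      intervalIntegral.integral_comp_sub_left, hstep (m + 1), ht 0]
    simp
  have hsum : ∑ l ∈ Finset.range (m + 2), d l
      = α + (1 - α) * ((m + 2 : ℕ) : ℝ) ^ (-α) + C * (Δt * ∫ s in Δt..(t (m + 2)), G s) := by
    rw [← hsumLR, Finset.sum_range_succ, Finset.sum_range_succ', Finset.sum_congr rfl el, e0, ek,
      Finset.sum_add_distrib, Finset.sum_range_succ' L, Finset.sum_range_succ R,
      ← Finset.mul_sum, Finset.sum_add_distrib]
    ring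
  have hk1 : (1 : ℝ) ≤ ((m + 2 : ℕ) : ℝ) := by exact_mod_cast (by omega : 1 ≤ m + 2)
  have hab : Δt ≤ t (m + 2) := by
    rw [ht]; nlinarith
  have hint := expSum_integral_le hG hT hα0 hΔ hab hbound
  set p : ℝ := ((m + 2 : ℕ) : ℝ) ^ (-α) with hp
  have hp0 : 0 ≤ p := by positivity
  have htk : t (m + 2) ^ (-α) = p * Δt ^ (-α) := by
    rw [ht, Real.mul_rpow (by positivity) hΔ.le]
  -- The powers of `T` and `Δt` in `C` cancel those produced by the integral.
  have hval : C * (Δt * ((1 + ε) * T ^ (1 + α) * ((Δt ^ (-α) - t (m + 2) ^ (-α)) / α)))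
      = (1 - α) * (1 + ε) * (1 - p) := by
    have hTp : T ^ (1 + α) ≠ 0 := (Real.rpow_pos_of_pos hT _).ne'
    have hpow : Δt ^ (α - 1) * Δt * Δt ^ (-α) = 1 := by
      rw [← Real.rpow_add_one hΔ.ne', ← Real.rpow_add hΔ]
      simp
    rw [htk, hC]
    calc _ = (1 - α) * (1 + ε) * (1 - p) * (Δt ^ (α - 1) * Δt * Δt ^ (-α)) := by
          field_simp
      _ = _ := by rw [hpow, mul_one]
  have hfin := mul_le_mul_of_nonneg_left (mul_le_mul_of_nonneg_left hint hΔ.le) hC0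
  rw [hval] at hfin
  rw [hsum]
  -- The slack is `ε (α + (1 - α) p)`.
  nlinarith [mul_nonneg hε hα0.le, mul_nonneg (mul_nonneg hε (sub_nonneg.2 hα1.le)) hp0]
end

section
/- Fix T > 0, a positive integer n, Δt = T/n, t_j = j·Δt, real values u₀,…,u_n with piecewise linear interpolant L1, an exponent 0 < α < 1, an integer 2 ≤ k ≤ n, a tolerance ε ≥ 0, and finitely many positive reals θᵢ, λᵢ indexed by a finite set I. Assume the exponential-sum-approximation bound |Σ_{i∈I} θᵢ·e^{−λᵢ s/T} − (s/T)^{−1−α}| ≤ ε·(s/T)^{−1−α} holds for all s ∈ [Δt, t_k]. Let M = max_{0 ≤ l ≤ k−1} |u_l|. Then (α/(T^{1+α}·Γ(1−α))) · | ∫_0^{t_{k−1}} L1(τ)·( Σ_{i∈I} θᵢ·e^{−λᵢ(t_k−τ)/T} − ((t_k−τ)/T)^{−1−α} ) dτ | ≤ (ε·M/Γ(1−α)) · Δt^{−α}. -/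
/-!
A convex combination of two nodal values is bounded by `M`, so `|L1| ≤ M` on `(0, t_{k-1}]`
(`abs_interpolant_le`). For such `τ` the point `s = t_k - τ` lies in `[Δt, t_k]`, where the
exponential-sum bound applies; hence the integrand is at most `M ε ((t_k - τ)/T)^{-1-α}` in
absolute value. The integral of this majorant is computed exactly (`integral_kernel`):
`∫_0^{t_{k-1}} ((t_k - τ)/T)^{-1-α} dτ = T^{1+α} (Δt^{-α} - t_k^{-α}) / α`,
and dropping the term `-t_k^{-α}` gives the claim.
-/

lemma abs_interpolant_le {h a b p q M : ℝ} (hh : 0 < h) (ha : 0 ≤ a) (hb : 0 ≤ b)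
    (hab : a + b = h) (hp : |p| ≤ M) (hq : |q| ≤ M) : |(a * p + b * q) / h| ≤ M := by
  rw [abs_div, abs_of_pos hh, div_le_iff₀ hh]
  calc |a * p + b * q| ≤ |a * p| + |b * q| := abs_add_le _ _
    _ = a * |p| + b * |q| := by rw [abs_mul, abs_mul, abs_of_nonneg ha, abs_of_nonneg hb]
    _ ≤ a * M + b * M := by gcongr
    _ = M * h := by rw [← hab]; ring

lemma integral_kernel {T α c b : ℝ} (hT : 0 < T) (hα : 0 < α) (hb : 0 ≤ b) (hbc : b < c) :
    ∫ τ in (0 : ℝ)..b, ((c - τ) / T) ^ (-1 - α) =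
      T ^ (1 + α) * (((c - b) ^ (-α) - c ^ (-α)) / α) := by
  have h1 : ∫ τ in (0 : ℝ)..b, ((c - τ) / T) ^ (-1 - α) =
      ∫ τ in (0 : ℝ)..b, T ^ (1 + α) * (c - τ) ^ (-1 - α) := by
    apply intervalIntegral.integral_congr
    intro τ hτ
    rw [Set.uIcc_of_le hb] at hτ
    have hc : 0 ≤ c - τ := by linarith [hτ.2]
    have hneg : (-1 - α) = -(1 + α) := by ring
    simp only
    rw [Real.div_rpow hc hT.le, hneg, Real.rpow_neg hT.le (1 + α), div_inv_eq_mul, mul_comm]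
  rw [h1, intervalIntegral.integral_const_mul,
    intervalIntegral.integral_comp_sub_left (fun x => x ^ (-1 - α)) c, integral_rpow]
  · have hexp : -1 - α + 1 = -α := by ring
    rw [hexp, sub_zero]
    field_simp
    ring
  · right
    refine ⟨by linarith, ?_⟩
    rw [Set.uIcc_of_le (by linarith)]
    intro h0
    linarith [h0.1]

lemma intervalIntegrable_kernel {T α c b : ℝ} (hT : 0 < T) (hb : 0 ≤ b) (hbc : b < c) :
    IntervalIntegrable (fun τ => ((c - τ) / T) ^ (-1 - α)) MeasureTheory.volume 0 b := by
  apply ContinuousOn.intervalIntegrable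
  rw [Set.uIcc_of_le hb]
  refine ContinuousOn.rpow_const (by fun_prop) fun τ hτ => Or.inl ?_
  have : 0 < c - τ := by linarith [hτ.2]
  positivity

/-- Error bound between the L1 and RF-L1 formulas (Lemma 5): with `Δt = T/n`,
`t_j = jΔt`, `L1` the piecewise linear interpolant of `u₀,…,u_n`, `0 < α < 1`,
`2 ≤ k ≤ n`, `ε ≥ 0`, positive weights/exponents `θᵢ, λᵢ` (`i ∈ I`) satisfying the
ESA bound `|∑ᵢ θᵢ e^{-λᵢ s/T} - (s/T)^{-1-α}| ≤ ε (s/T)^{-1-α}` on `[Δt, t_k]`, and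
`M = max_{0 ≤ l ≤ k-1} |u_l|`, one has
`(α/(T^{1+α} Γ(1-α))) |∫_0^{t_{k-1}} L1(τ)(∑ᵢ θᵢ e^{-λᵢ(t_k-τ)/T} - ((t_k-τ)/T)^{-1-α}) dτ|
  ≤ (ε M / Γ(1-α)) Δt^{-α}`. -/
theorem rf_l1_vs_l1_error_bound {ι : Type*}
    (T : ℝ) (hT : 0 < T) (n : ℕ) (hn : 0 < n)
    (Δt : ℝ) (hΔt : Δt = T / n)
    (t : ℕ → ℝ) (ht : ∀ j, t j = (j : ℝ) * Δt)
    (u : ℕ → ℝ)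
    (L1 : ℝ → ℝ)
    (hL1 : ∀ l, 1 ≤ l → l ≤ n → ∀ τ ∈ Set.Icc (t (l - 1)) (t l),
      L1 τ = ((t l - τ) * u (l - 1) + (τ - t (l - 1)) * u l) / Δt)
    (α : ℝ) (hα0 : 0 < α) (hα1 : α < 1)
    (k : ℕ) (hk : 2 ≤ k) (hkn : k ≤ n)
    (ε : ℝ) (hε : 0 ≤ ε)
    (I : Finset ι) (θ lam : ι → ℝ)
    (hθ : ∀ i ∈ I, 0 < θ i) (hlam : ∀ i ∈ I, 0 < lam i)
    (hesa : ∀ s ∈ Set.Icc Δt (t k),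
      |(∑ i ∈ I, θ i * Real.exp (-(lam i) * s / T)) - (s / T) ^ (-1 - α)|
        ≤ ε * (s / T) ^ (-1 - α))
    (M : ℝ)
    (hM : M = (Finset.range k).sup' (Finset.nonempty_range_iff.mpr (by omega))
      fun l => |u l|) :
    (α / (T ^ (1 + α) * Real.Gamma (1 - α))) *
        |∫ τ in (0 : ℝ)..(t (k - 1)),
          L1 τ * ((∑ i ∈ I, θ i * Real.exp (-(lam i) * (t k - τ) / T))
            - ((t k - τ) / T) ^ (-1 - α))|
      ≤ (ε * M / Real.Gamma (1 - α)) * Δt ^ (-α) := by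
  have hn' : (0 : ℝ) < n := by exact_mod_cast hn
  have hΔ : 0 < Δt := by rw [hΔt]; positivity
  have huM : ∀ l < k, |u l| ≤ M := by
    intro l hl
    rw [hM]
    exact Finset.le_sup' (fun l => |u l|) (Finset.mem_range.mpr hl)
  have hM0 : 0 ≤ M := (abs_nonneg _).trans (huM 0 (by omega))
  have hpred : ∀ l, 1 ≤ l → t (l - 1) = t l - Δt := by
    intro l hl
    rw [ht, ht, Nat.cast_sub hl]
    push_cast
    ring
  have hb0 : 0 ≤ t (k - 1) := by rw [ht]; positivity
  have hbk : t (k - 1) = t k - Δt := hpred k (by omega)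
  have hbc : t (k - 1) < t k := by linarith
  have hL1M : ∀ τ ∈ Set.Ioc 0 (t (k - 1)), |L1 τ| ≤ M := by
    intro τ hτ
    -- `l = ⌈τ / Δt⌉` is the index of the cell `(t (l - 1), t l]` that contains `τ`.
    have hl1 : 1 ≤ ⌈τ / Δt⌉₊ := Nat.one_le_ceil_iff.mpr (div_pos hτ.1 hΔ)
    have hlk : ⌈τ / Δt⌉₊ ≤ k - 1 := by
      rw [Nat.ceil_le, div_le_iff₀ hΔ, ← ht]
      exact hτ.2
    have hup : τ ≤ t ⌈τ / Δt⌉₊ := by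
      rw [ht, ← div_le_iff₀ hΔ]
      exact Nat.le_ceil _
    have hlow : t (⌈τ / Δt⌉₊ - 1) ≤ τ := by
      rw [hpred _ hl1, ht]
      have h1 := Nat.ceil_lt_add_one (div_pos hτ.1 hΔ).le
      have h2 := mul_lt_mul_of_pos_right h1 hΔ
      rw [add_mul, div_mul_cancel₀ _ hΔ.ne'] at h2
      linarith
    rw [hL1 _ hl1 (by omega) τ ⟨hlow, hup⟩]
    refine abs_interpolant_le hΔ (by linarith) (by linarith) ?_ (huM _ (by omega))
      (huM _ (by omega))
    rw [hpred _ hl1]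
    ring
  have hint := intervalIntegral.norm_integral_le_of_norm_le (μ := MeasureTheory.volume)
    (f := fun τ => L1 τ * ((∑ i ∈ I, θ i * Real.exp (-(lam i) * (t k - τ) / T))
            - ((t k - τ) / T) ^ (-1 - α)))
    (g := fun τ => M * ε * ((t k - τ) / T) ^ (-1 - α)) hb0
    (Filter.Eventually.of_forall fun τ hτ => by
      rw [Real.norm_eq_abs, abs_mul, mul_assoc]
      exact mul_le_mul (hL1M τ hτ)
        (hesa (t k - τ) ⟨by linarith [hτ.2], by linarith [hτ.1]⟩) (abs_nonneg _) hM0)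
    ((intervalIntegrable_kernel hT hb0 hbc).const_mul _)
  rw [intervalIntegral.integral_const_mul, integral_kernel hT hα0 hb0 hbc, Real.norm_eq_abs,
    show t k - t (k - 1) = Δt by linarith] at hint
  have hG : 0 < Real.Gamma (1 - α) := Real.Gamma_pos_of_pos (by linarith)
  have hTp : 0 < T ^ (1 + α) := Real.rpow_pos_of_pos hT _
  have htk : 0 ≤ t k ^ (-α) := Real.rpow_nonneg (by linarith) _
  refine (mul_le_mul_of_nonneg_left hint (by positivity)).trans ?_
  calc _ = (ε * M / Real.Gamma (1 - α)) * (Δt ^ (-α) - t k ^ (-α)) := by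
        field_simp
    _ ≤ (ε * M / Real.Gamma (1 - α)) * Δt ^ (-α) :=
        mul_le_mul_of_nonneg_left (by linarith) (by positivity)
end

section
/- Let n be a positive integer, Δt > 0, ζ > 0, ε ≥ 0. Let r₀, r₁, …, r_n ≥ 0 with r₀ = 0, let s⁽¹⁾, …, s⁽ⁿ⁾ > 0, let J¹, …, Jⁿ ≥ 0, and for each 1 ≤ k ≤ n let d₁⁽ᵏ⁾, …, d_{k−1}⁽ᵏ⁾ ≥ 0 satisfy Σ_{l=1}^{k−1} d_l⁽ᵏ⁾ ≤ 1 + ε. Suppose that for every 1 ≤ k ≤ n: (1 + ζ·Δt·s⁽ᵏ⁾)·r_k ≤ r_{k−1} + ζ·Δt·s⁽ᵏ⁾·Σ_{l=1}^{k−1} d_l⁽ᵏ⁾·r_l + Δt·Jᵏ. Then for every 1 ≤ k ≤ n: r_k ≤ Δt·(1+ε)ᵏ·Σ_{q=1}^{k} Jᵠ. -/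
/-!
Put `B k = Δt (1+ε)^k ∑_{q ≤ k} J q` and `c = ζ Δt s⁽ᵏ⁺¹⁾`. If every earlier `r l` is at most `B k`,
the recursion gives
`(1 + c) r_{k+1} ≤ B k + c (1+ε) B k + Δt J_{k+1} ≤ (1 + c) ((1+ε) B k + Δt J_{k+1})`,
and `(1+ε) B k + Δt J_{k+1} ≤ B (k+1)` because `(1+ε)^(k+1) ≥ 1`. Since `B` is also
nondecreasing, induction on `k` applies to the claim `r l ≤ B k` for all `l ≤ k`.
-/

/-- Discrete Grönwall-type stability estimate (induction in Theorem 2): if `r₀ = 0`,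
`r_k, J_k ≥ 0`, `s⁽ᵏ⁾ > 0`, the kernels `d_l⁽ᵏ⁾ ≥ 0` satisfy `∑_{l=1}^{k-1} d_l⁽ᵏ⁾ ≤ 1+ε`,
and `(1 + ζΔt s⁽ᵏ⁾) r_k ≤ r_{k-1} + ζΔt s⁽ᵏ⁾ ∑_{l=1}^{k-1} d_l⁽ᵏ⁾ r_l + Δt J_k` for all
`1 ≤ k ≤ n`, then `r_k ≤ Δt (1+ε)^k ∑_{q=1}^{k} J_q` for all `1 ≤ k ≤ n`. -/
theorem discrete_gronwall_rf_l1
    (n : ℕ) (hn : 0 < n)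
    (Δt ζ ε : ℝ) (hΔt : 0 < Δt) (hζ : 0 < ζ) (hε : 0 ≤ ε)
    (r s J : ℕ → ℝ) (d : ℕ → ℕ → ℝ)
    (hr0 : r 0 = 0)
    (hr : ∀ k, k ≤ n → 0 ≤ r k)
    (hs : ∀ k, 1 ≤ k → k ≤ n → 0 < s k)
    (hJ : ∀ k, 1 ≤ k → k ≤ n → 0 ≤ J k)
    (hd : ∀ k, 1 ≤ k → k ≤ n → ∀ l, 1 ≤ l → l ≤ k - 1 → 0 ≤ d k l)
    (hdsum : ∀ k, 1 ≤ k → k ≤ n → ∑ l ∈ Finset.Icc 1 (k - 1), d k l ≤ 1 + ε)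
    (hrec : ∀ k, 1 ≤ k → k ≤ n →
      (1 + ζ * Δt * s k) * r k
        ≤ r (k - 1) + ζ * Δt * s k * (∑ l ∈ Finset.Icc 1 (k - 1), d k l * r l)
          + Δt * J k) :
    ∀ k, 1 ≤ k → k ≤ n → r k ≤ Δt * (1 + ε) ^ k * ∑ q ∈ Finset.Icc 1 k, J q := by
  -- The bound is proved for all `r l` with `l ≤ k` at once, as the memory sum needs a uniform bound.
  have key : ∀ k, k ≤ n → ∀ l, l ≤ k →
      r l ≤ Δt * (1 + ε) ^ k * ∑ q ∈ Finset.Icc 1 k, J q := by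
    intro k
    induction k with
    | zero =>
      intro _ l hl
      obtain rfl : l = 0 := by omega
      simp [hr0]
    | succ k ih =>
      intro hk
      have ih := ih (by omega)
      set B := Δt * (1 + ε) ^ k * ∑ q ∈ Finset.Icc 1 k, J q with hB
      have hB0 : 0 ≤ B := (hr 0 (by omega)).trans (ih 0 (by omega))
      have hJk : 0 ≤ Δt * J (k + 1) := mul_nonneg hΔt.le (hJ _ (by omega) hk)
      have hpow : 1 ≤ (1 + ε) ^ (k + 1) := one_le_pow₀ (by linarith)
      have hstep : Δt * (1 + ε) ^ (k + 1) * ∑ q ∈ Finset.Icc 1 (k + 1), J q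
          = (1 + ε) * B + (1 + ε) ^ (k + 1) * (Δt * J (k + 1)) := by
        rw [Finset.sum_Icc_succ_top (by omega), hB]
        ring
      have hge : (1 + ε) * B + Δt * J (k + 1)
          ≤ Δt * (1 + ε) ^ (k + 1) * ∑ q ∈ Finset.Icc 1 (k + 1), J q := by
        rw [hstep]
        linarith [le_mul_of_one_le_left hJk hpow]
      have hεB : 0 ≤ ε * B := mul_nonneg hε hB0
      intro l hl
      rcases Nat.lt_or_ge k l with h | h
      · obtain rfl : l = k + 1 := by omega
        refine le_trans ?_ hge
        have hc : 0 < ζ * Δt * s (k + 1) := mul_pos (mul_pos hζ hΔt) (hs _ (by omega) hk)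
        have hrec' := hrec (k + 1) (by omega) hk
        have hds := hdsum (k + 1) (by omega) hk
        have hd' := hd (k + 1) (by omega) hk
        simp only [Nat.add_sub_cancel] at hrec' hds hd'
        have hsum : ∑ l ∈ Finset.Icc 1 k, d (k + 1) l * r l ≤ (1 + ε) * B := by
          calc ∑ l ∈ Finset.Icc 1 k, d (k + 1) l * r l
              ≤ ∑ l ∈ Finset.Icc 1 k, d (k + 1) l * B := by
                refine Finset.sum_le_sum fun l hl => ?_
                rw [Finset.mem_Icc] at hl
                exact mul_le_mul_of_nonneg_left (ih l hl.2) (hd' l hl.1 hl.2)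
            _ = (∑ l ∈ Finset.Icc 1 k, d (k + 1) l) * B := by rw [Finset.sum_mul]
            _ ≤ (1 + ε) * B := mul_le_mul_of_nonneg_right hds hB0
        have h1 := mul_le_mul_of_nonneg_left hsum hc.le
        have h2 := ih k le_rfl
        have h3 := mul_nonneg hc.le hJk
        refine le_of_mul_le_mul_left ?_ (by linarith : 0 < 1 + ζ * Δt * s (k + 1))
        linarith
      · linarith [ih l h]
  exact fun k _ hk => key k hk k le_rfl
end

section
/- Let T > 0, let 0 ≤ α₀ < 1, let C ≥ 0, and let u : [0, T] → ℝ be continuously differentiable on [0, T] and twice differentiable on (0, T] with |u″(t)| ≤ C·t^{−α₀} for all t ∈ (0, T]. Let n be a positive integer, Δt = T/n, t_k = k·Δt. Then for every 1 ≤ k ≤ n: |u′(t_k) − (u(t_k) − u(t_{k−1}))/Δt| ≤ C·k^{−α₀}·Δt^{1−α₀}. -/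
/-!
Put `a = t_{k-1}`, `b = t_k` and `F τ = (τ - a) u'(τ) - u(τ)`. Then
`F b - F a = Δt u'(b) - (u b - u a)` is `Δt` times the truncation error, and
`F' τ = (τ - a) u''(τ)`. The mean value theorem on `[a, b]`, in place of the integral remainder,
reduces the claim to the pointwise estimate `(τ - a) τ^{-α₀} ≤ (b - a) b^{-α₀}` on `(a, b)`
(`weight_le`): the factor `τ - a` absorbs the singularity, so the bound covers `k = 1` as well.
-/

/-- The function `τ ↦ (τ - a) τ^{-α}` is at most its value at the right end point: it is the
product of the nonnegative nondecreasing functions `(τ - a) / τ` and `τ^{1-α}`. -/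
lemma weight_le {a b τ α : ℝ} (ha : 0 ≤ a) (haτ : a < τ) (hτb : τ < b) (hα : α < 1) :
    (τ - a) * τ ^ (-α) ≤ (b - a) * b ^ (-α) := by
  have hτ : 0 < τ := ha.trans_lt haτ
  have hb : 0 < b := hτ.trans hτb
  have split : ∀ x : ℝ, 0 < x → (x - a) * x ^ (-α) = (x - a) / x * x ^ (1 - α) := by
    intro x hx
    rw [show 1 - α = 1 + -α by ring, Real.rpow_add hx, Real.rpow_one]
    field_simp
  rw [split τ hτ, split b hb]
  have h1 : (τ - a) / τ ≤ (b - a) / b := by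
    rw [div_le_div_iff₀ hτ hb]
    nlinarith
  have h2 : τ ^ (1 - α) ≤ b ^ (1 - α) :=
    Real.rpow_le_rpow hτ.le hτb.le (by linarith)
  exact mul_le_mul h1 h2 (Real.rpow_nonneg hτ.le _) (div_nonneg (by linarith) hb.le)

/-- Truncation error of the backward difference quotient for solutions with an
initial-layer singularity (Lemma 8): if `u` is continuously differentiable on `[0,T]`,
twice differentiable on `(0,T]` with `|u''(t)| ≤ C t^{-α₀}` there, `0 ≤ α₀ < 1`,
`Δt = T/n`, `t_k = kΔt`, then for `1 ≤ k ≤ n`,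
`|u'(t_k) - (u(t_k) - u(t_{k-1}))/Δt| ≤ C k^{-α₀} Δt^{1-α₀}`. -/
theorem backward_difference_truncation_error
    (T : ℝ) (hT : 0 < T)
    (α₀ : ℝ) (hα₀0 : 0 ≤ α₀) (hα₀1 : α₀ < 1)
    (C : ℝ) (hC : 0 ≤ C)
    (u u' u'' : ℝ → ℝ)
    (hu' : ∀ s ∈ Set.Icc (0 : ℝ) T, HasDerivWithinAt u (u' s) (Set.Icc 0 T) s)
    (hu'c : ContinuousOn u' (Set.Icc 0 T))
    (hu'' : ∀ s ∈ Set.Ioc (0 : ℝ) T, HasDerivWithinAt u' (u'' s) (Set.Ioc 0 T) s)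
    (hbound : ∀ s ∈ Set.Ioc (0 : ℝ) T, |u'' s| ≤ C * s ^ (-α₀))
    (n : ℕ) (hn : 0 < n)
    (Δt : ℝ) (hΔt : Δt = T / n)
    (t : ℕ → ℝ) (ht : ∀ j, t j = (j : ℝ) * Δt) :
    ∀ k, 1 ≤ k → k ≤ n →
      |u' (t k) - (u (t k) - u (t (k - 1))) / Δt|
        ≤ C * (k : ℝ) ^ (-α₀) * Δt ^ (1 - α₀) := by
  intro k hk hkn
  have hn' : (0 : ℝ) < n := by exact_mod_cast hn
  have hΔ : 0 < Δt := hΔt ▸ div_pos hT hn'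
  have hk' : (1 : ℝ) ≤ k := by exact_mod_cast hk
  have hkn' : (k : ℝ) ≤ n := by exact_mod_cast hkn
  have hta : t (k - 1) = (k - 1 : ℝ) * Δt := by rw [ht, Nat.cast_sub hk, Nat.cast_one]
  have htb : t k = k * Δt := ht k
  have hba : t k - t (k - 1) = Δt := by rw [hta, htb]; ring
  have ha : 0 ≤ t (k - 1) := hta ▸ mul_nonneg (by linarith) hΔ.le
  have hb : t k ≤ T := by
    have hnT : n * Δt = T := by rw [hΔt]; field_simp
    rw [htb, ← hnT]
    exact mul_le_mul_of_nonneg_right hkn' hΔ.le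
  have hscale : t k ^ (-α₀) * Δt = (k : ℝ) ^ (-α₀) * Δt ^ (1 - α₀) := by
    rw [htb, Real.mul_rpow (by linarith) hΔ.le, show 1 - α₀ = -α₀ + 1 by ring,
      Real.rpow_add hΔ, Real.rpow_one]
    ring
  generalize t (k - 1) = a at *
  generalize t k = b at *
  have hab : a < b := by linarith
  have hsub : Set.Icc a b ⊆ Set.Icc 0 T := Set.Icc_subset_Icc ha hb
  have hFc : ContinuousOn (fun τ => (τ - a) * u' τ - u τ) (Set.Icc a b) := by
    have huc : ContinuousOn u (Set.Icc 0 T) := fun s hs => (hu' s hs).continuousWithinAt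
    exact ((continuousOn_id.sub continuousOn_const).mul (hu'c.mono hsub)).sub (huc.mono hsub)
  have hFd : ∀ τ ∈ Set.Ioo a b,
      HasDerivAt (fun τ => (τ - a) * u' τ - u τ) ((τ - a) * u'' τ) τ := by
    intro τ hτ
    have h0 : 0 < τ := ha.trans_lt hτ.1
    have h1 : τ < T := hτ.2.trans_le hb
    have d1 := (hu' τ ⟨h0.le, h1.le⟩).hasDerivAt (Icc_mem_nhds h0 h1)
    have d2 := (hu'' τ ⟨h0, h1.le⟩).hasDerivAt (Ioc_mem_nhds h0 h1)
    refine ((((hasDerivAt_id τ).sub_const a).mul d2).sub d1).congr_deriv ?_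
    simp
  obtain ⟨τ, hτ, hslope⟩ := exists_hasDerivAt_eq_slope _ _ hab hFc hFd
  have herr : u' b - (u b - u a) / Δt = (τ - a) * u'' τ := by
    rw [hslope, hba]
    field_simp
    ring
  rw [herr, abs_mul, abs_of_pos (sub_pos.2 hτ.1)]
  calc (τ - a) * |u'' τ|
      ≤ (τ - a) * (C * τ ^ (-α₀)) :=
        mul_le_mul_of_nonneg_left
          (hbound τ ⟨ha.trans_lt hτ.1, hτ.2.le.trans hb⟩) (sub_pos.2 hτ.1).le
    _ = C * ((τ - a) * τ ^ (-α₀)) := by ring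
    _ ≤ C * ((b - a) * b ^ (-α₀)) :=
        mul_le_mul_of_nonneg_left (weight_le ha hτ.1 hτ.2 hα₀1) hC
    _ = C * (k : ℝ) ^ (-α₀) * Δt ^ (1 - α₀) := by
        rw [hba, mul_assoc, ← hscale]; ring
end
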